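/- Let S ⊂ ℝ^k be a halfspace and let Σ ⊆ S be an additive semigroup containing 0 (i.e., λ, μ ∈ Σ implies λ + μ ∈ Σ). Then the unital Banach algebra APW^k_Σ, consisting of almost periodic functions with absolutely convergent Bohr-Fourier series and Bohr-Fourier spectrum in Σ, is an Hermite ring. -/

import Mathlib

/- Almost periodic functions of `k` real variables, their Bohr-Fourier
coefficients and spectra, the Wiener algebra, and halfspaces. -/

open MeasureTheory Filter BoundedContinuousFunction

noncomputable section

/-- The Banach algebra of bounded continuous functions `ℝ^k → ℂ` (sup norm). -/
abbrev APB (k : ℕ) := BoundedContinuousFunction (Fin k → ℝ) ℂ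

/-- The elementary exponential `e_λ(x) = e^{i⟨λ,x⟩}` as a bounded continuous function. -/
def apExp (k : ℕ) (lam : Fin k → ℝ) : APB k :=
  BoundedContinuousFunction.ofNormedAddCommGroup
    (fun x => Complex.exp (Complex.I * ((∑ j, lam j * x j : ℝ) : ℂ)))
    (by fun_prop) 1
    (fun x => by
      simp [Complex.norm_exp, Complex.mul_re])

/-- `AP^k`: the closed subalgebra of `L^∞`-type bounded continuous functions
generated by all exponentials `e_λ`, `λ ∈ ℝ^k`. -/
def APalg (k : ℕ) : Subalgebra ℂ (APB k) :=
  (Algebra.adjoin ℂ (Set.range (apExp k))).topologicalClosure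

/-- The Bohr-Fourier coefficient
`f_λ = lim_{T→∞} (2T)^{-k} ∫_{[-T,T]^k} e^{-i⟨λ,x⟩} f(x) dx`. -/
def bohrCoeff (k : ℕ) (f : (Fin k → ℝ) → ℂ) (lam : Fin k → ℝ) : ℂ :=
  limUnder atTop (fun T : ℝ =>
    (((2 * T) ^ k : ℝ) : ℂ)⁻¹ *
      ∫ x in Set.Icc (fun _ => -T : Fin k → ℝ) (fun _ => T),
        Complex.exp (-(Complex.I * ((∑ j, lam j * x j : ℝ) : ℂ))) * f x)

/-- The Bohr-Fourier spectrum `σ(f) = {λ : f_λ ≠ 0}`. -/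
def bohrSpectrum (k : ℕ) (f : (Fin k → ℝ) → ℂ) : Set (Fin k → ℝ) :=
  {lam | bohrCoeff k f lam ≠ 0}

/-- Membership in `AP^k_Δ = {f ∈ AP^k : σ(f) ⊆ Δ}`. -/
def APmem (k : ℕ) (Δ : Set (Fin k → ℝ)) (f : APB k) : Prop :=
  f ∈ APalg k ∧ bohrSpectrum k ⇑f ⊆ Δ

/-- Membership in the Wiener algebra `APW^k_Δ`: almost periodic with spectrum
in `Δ` and absolutely convergent Bohr-Fourier series. -/
def APWmem (k : ℕ) (Δ : Set (Fin k → ℝ)) (f : APB k) : Prop :=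
  APmem k Δ f ∧ Summable (fun lam => ‖bohrCoeff k (⇑f) lam‖)

/-- The Wiener norm `‖f‖_W = ∑_λ |f_λ|`. -/
def wienerNorm (k : ℕ) (f : (Fin k → ℝ) → ℂ) : ℝ :=
  ∑' lam, ‖bohrCoeff k f lam‖

/-- A halfspace `S ⊂ ℝ^k`: `ℝ^k = S ∪ (-S)`, `S ∩ (-S) = {0}`, and `S` is
closed under addition and under multiplication by nonnegative reals. -/
structure IsHalfspace (k : ℕ) (S : Set (Fin k → ℝ)) : Prop where
  union : S ∪ -S = Set.univ
  inter : S ∩ -S = {0}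
  add_mem : ∀ x ∈ S, ∀ y ∈ S, x + y ∈ S
  smul_mem : ∀ x ∈ S, ∀ a : ℝ, 0 ≤ a → a • x ∈ S

/-!
The algebra `APW^k_A` is a Banach algebra for the Wiener norm: the Bohr mean value shows that an
almost periodic function is determined by its Bohr-Fourier coefficients, so an element of `APW^k_A`
is the sum of its Bohr-Fourier series. Over a Banach algebra the orbits of the general linear group
on unimodular rows are open, hence a connected family of unimodular rows lies in a single orbit,
and a given row may be replaced by a nearby row of trigonometric polynomials.

Finitely many nonzero points of a halfspace have a convex hull missing the origin, so some linear
functional `ω` is positive at every nonzero frequency of these polynomials. The dilations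
`e_λ ↦ s ^ ω(λ) e_λ`, `0 ≤ s ≤ 1`, are homomorphisms that do not increase the Wiener norm. Applied
to an approximate Bézout identity they keep the row unimodular, and they deform it to its row of
constant terms, which is equivalent to `(1, 0, …, 0)`.
-/

open scoped Topology

section UnimodularRows

variable {n R : Type*} [Fintype n] [CommRing R]

/-- A row `a` over `R` is unimodular if its entries generate the unit ideal. -/
def IsUnimodular (a : n → R) : Prop := ∃ b : n → R, a ⬝ᵥ b = 1

lemma isUnimodular_of_isUnit_dotProduct {a b : n → R} (h : IsUnit (a ⬝ᵥ b)) : IsUnimodular a := by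
  obtain ⟨u, hu⟩ := h
  exact ⟨(↑u⁻¹ : R) • b, by rw [dotProduct_smul, ← hu, smul_eq_mul, Units.inv_mul]⟩

variable [DecidableEq n]

/-- Two rows over `R` are equivalent if they lie in the same orbit of the general linear group. -/
def RowEquiv (a a' : n → R) : Prop := ∃ G : (Matrix n n R)ˣ, Matrix.vecMul a G.val = a'

namespace RowEquiv

variable {a a' a'' : n → R}

lemma symm (h : RowEquiv a a') : RowEquiv a' a := by
  obtain ⟨G, rfl⟩ := h
  exact ⟨G⁻¹, by rw [Matrix.vecMul_vecMul, Units.mul_inv, Matrix.vecMul_one]⟩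

lemma trans (h : RowEquiv a a') (h' : RowEquiv a' a'') : RowEquiv a a'' := by
  obtain ⟨G, rfl⟩ := h
  obtain ⟨H, rfl⟩ := h'
  exact ⟨G * H, by rw [Matrix.vecMul_vecMul, Units.val_mul]⟩

/-- The rank-one perturbation `1 + b (a' - a)` of the identity moves `a` to `a'`, and its
determinant is `a' ⬝ᵥ b`. -/
lemma of_dotProduct_eq_one {b : n → R} (h : a ⬝ᵥ b = 1) (h' : IsUnit (a' ⬝ᵥ b)) :
    RowEquiv a a' := by
  have hdet : IsUnit (1 + Matrix.vecMulVec b (a' - a)).det := by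
    rwa [Matrix.vecMulVec_eq Unit, Matrix.det_one_add_replicateCol_mul_replicateRow,
      sub_dotProduct, h, add_sub_cancel]
  obtain ⟨G, hG⟩ := (Matrix.isUnit_iff_isUnit_det _).2 hdet
  refine ⟨G, ?_⟩
  rw [hG, Matrix.vecMul_add, Matrix.vecMul_one, Matrix.vecMul_vecMulVec, h, one_smul,
    add_sub_cancel]

lemma single_of_algebraMap {K : Type*} [Field K] [Algebra K R] {c : n → K} (hc : c ≠ 0) (i : n) :
    RowEquiv (algebraMap K R ∘ c) (Pi.single i 1) := by
  obtain ⟨d, hd, hdi⟩ : ∃ d : n → K, c ⬝ᵥ d = 1 ∧ d i ≠ 0 := by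
    by_cases hi : c i = 0
    · obtain ⟨j, hj⟩ := Function.ne_iff.1 hc
      have hij : i ≠ j := by
        rintro rfl
        exact hj hi
      exact ⟨Pi.single i 1 + Pi.single j (c j)⁻¹,
        by simp [dotProduct_add, hi, mul_inv_cancel₀ hj], by simp [hij]⟩
    · exact ⟨Pi.single i (c i)⁻¹, by simp [hi], by simpa using hi⟩
  refine of_dotProduct_eq_one (b := algebraMap K R ∘ d) ?_ ?_
  · rw [← RingHom.map_dotProduct, hd, map_one]
  · rw [single_one_dotProduct]
    exact (IsUnit.mk0 _ hdi).map _

end RowEquiv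

/-- A commutative ring is Hermite if every unimodular row over it is the first row of an
invertible matrix. -/
def IsHermiteRing (R : Type*) [CommRing R] : Prop :=
  ∀ (m : ℕ) (a : Fin (m + 1) → R), IsUnimodular a →
    ∃ G : (Matrix (Fin (m + 1)) (Fin (m + 1)) R)ˣ, G.val 0 = a

lemma isHermiteRing_of_rowEquiv_single
    (h : ∀ (m : ℕ) (a : Fin (m + 1) → R), IsUnimodular a → RowEquiv a (Pi.single 0 1)) :
    IsHermiteRing R := by
  intro m a ha
  obtain ⟨G, hG⟩ := (h m a ha).symm
  exact ⟨G, by rwa [Matrix.single_one_vecMul] at hG⟩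

end UnimodularRows

section TopologicalRing

variable {n R : Type*} [Fintype n] [DecidableEq n] [NormedCommRing R] [HasSummableGeomSeries R]

lemma IsUnimodular.eventually_rowEquiv {a : n → R} (ha : IsUnimodular a) :
    ∀ᶠ a' in 𝓝 a, RowEquiv a a' := by
  obtain ⟨b, hb⟩ := ha
  have hcont : Continuous fun a' : n → R => a' ⬝ᵥ b := by fun_prop
  have hunit : ∀ᶠ a' in 𝓝 a, IsUnit (a' ⬝ᵥ b) :=
    hcont.continuousAt.eventually (Units.isOpen.mem_nhds (by simp [hb]))
  exact hunit.mono fun _ h => RowEquiv.of_dotProduct_eq_one hb h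

/-- Orbits of the general linear group are open among the unimodular rows, hence a connected set
of unimodular rows meets only one of them. -/
lemma rowEquiv_of_isPreconnected {s : Set (n → R)} (hs : IsPreconnected s)
    (hu : ∀ a ∈ s, IsUnimodular a) {a a' : n → R} (ha : a ∈ s) (ha' : a' ∈ s) : RowEquiv a a' :=
  hs.induction₂ RowEquiv (fun a ha => (hu a ha).eventually_rowEquiv.filter_mono nhdsWithin_le_nhds)
    (fun _ _ _ _ _ _ h h' => h.trans h') (fun _ _ _ _ h => h.symm) ha ha'

end TopologicalRing

variable {k : ℕ}

section Exponentials

lemma apExp_apply (lam x : Fin k → ℝ) :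
    apExp k lam x = Complex.exp (Complex.I * ((∑ j, lam j * x j : ℝ) : ℂ)) := rfl

lemma apExp_zero : apExp k 0 = 1 := by
  ext x
  simp [apExp_apply]

lemma apExp_add (lam mu : Fin k → ℝ) : apExp k (lam + mu) = apExp k lam * apExp k mu := by
  ext x
  simp only [BoundedContinuousFunction.mul_apply, apExp_apply, ← Complex.exp_add, Pi.add_apply,
    add_mul, Finset.sum_add_distrib]
  push_cast
  ring_nf

lemma apExp_apply_sub (lam x y : Fin k → ℝ) :
    apExp k lam (y - x) = apExp k lam y * apExp k (-lam) x := by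
  simp only [apExp_apply, ← Complex.exp_add, Pi.sub_apply, Pi.neg_apply, mul_sub,
    Finset.sum_sub_distrib, neg_mul, Finset.sum_neg_distrib]
  push_cast
  ring_nf

lemma norm_apExp_apply (lam x : Fin k → ℝ) : ‖apExp k lam x‖ = 1 := by
  rw [apExp_apply, mul_comm, Complex.norm_exp_ofReal_mul_I]

lemma norm_apExp (lam : Fin k → ℝ) : ‖apExp k lam‖ = 1 :=
  ((BoundedContinuousFunction.norm_le zero_le_one).2 fun x => (norm_apExp_apply lam x).le).antisymm
    ((norm_apExp_apply lam 0).ge.trans ((apExp k lam).norm_coe_le_norm 0))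

lemma star_apExp (lam : Fin k → ℝ) : star (apExp k lam) = apExp k (-lam) := by
  ext x
  simp only [BoundedContinuousFunction.star_apply, apExp_apply, RCLike.star_def,
    ← Complex.exp_conj, map_mul, Complex.conj_I, Complex.conj_ofReal, Pi.neg_apply, neg_mul,
    Finset.sum_neg_distrib, Complex.ofReal_neg, mul_neg]

/-- The exponentials `e_λ` as a character of the additive group of frequencies. -/
def apExpHom (k : ℕ) : Multiplicative (Fin k → ℝ) →* APB k where
  toFun lam := apExp k lam.toAdd
  map_one' := apExp_zero
  map_mul' lam mu := apExp_add lam.toAdd mu.toAdd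

lemma adjoin_range_apExp :
    (Algebra.adjoin ℂ (Set.range (apExp k))).toSubmodule =
      Submodule.span ℂ (Set.range (apExp k)) := by
  have hrange : Set.range (apExp k) = MonoidHom.mrange (apExpHom k) := rfl
  rw [Algebra.adjoin_eq_span, hrange, Submonoid.closure_eq]

lemma isClosed_APalg : IsClosed (APalg k : Set (APB k)) :=
  Subalgebra.isClosed_topologicalClosure _

lemma apExp_mem_APalg (lam : Fin k → ℝ) : apExp k lam ∈ APalg k :=
  Subalgebra.le_topologicalClosure _ (Algebra.subset_adjoin ⟨lam, rfl⟩)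

lemma APalg_induction {P : APB k → Prop} (hexp : ∀ lam, P (apExp k lam))
    (hadd : ∀ f g, P f → P g → P (f + g)) (hsmul : ∀ (c : ℂ) f, P f → P (c • f))
    (hclosed : IsClosed {f | P f}) {f : APB k} (hf : f ∈ APalg k) : P f := by
  refine closure_minimal (fun p hp => ?_) hclosed hf
  replace hp : p ∈ (Algebra.adjoin ℂ (Set.range (apExp k))).toSubmodule := hp
  rw [adjoin_range_apExp] at hp
  induction hp using Submodule.span_induction with
  | mem x hx =>
    obtain ⟨lam, rfl⟩ := hx
    exact hexp lam
  | zero => simpa using hsmul 0 _ (hexp 0)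
  | add x y _ _ hx hy => exact hadd x y hx hy
  | smul c x _ hx => exact hsmul c x hx

lemma star_mem_APalg {f : APB k} (hf : f ∈ APalg k) : star f ∈ APalg k := by
  refine APalg_induction (P := fun f => star f ∈ APalg k) ?_ ?_ ?_
    (isClosed_APalg.preimage continuous_star) hf
  · intro lam
    rw [star_apExp]
    exact apExp_mem_APalg _
  · intro f g hf hg
    rw [star_add]
    exact (APalg k).add_mem hf hg
  · intro c f hf
    rw [star_smul]
    exact (APalg k).smul_mem hf _

end Exponentials

section Mean

lemma integrableOn_box (T : ℝ) (f : APB k) :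
    IntegrableOn f (Set.Icc (fun _ => -T : Fin k → ℝ) (fun _ => T)) :=
  f.continuous.continuousOn.integrableOn_compact isCompact_Icc

lemma volume_real_box {T : ℝ} (hT : 0 ≤ T) :
    volume.real (Set.Icc (fun _ => -T : Fin k → ℝ) (fun _ => T)) = (2 * T) ^ k := by
  rw [Measure.real, Real.volume_Icc_pi_toReal fun _ => by linarith]
  simp only [sub_neg_eq_add, Finset.prod_const, Finset.card_univ, Fintype.card_fin, two_mul]

lemma volume_real_box_le (T : ℝ) :
    volume.real (Set.Icc (fun _ => -T : Fin k → ℝ) (fun _ => T)) ≤ |(2 * T) ^ k| := by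
  refine (measureReal_mono (Set.Icc_subset_Icc (fun _ => neg_le_neg (le_abs_self T))
    fun _ => le_abs_self T) isCompact_Icc.measure_lt_top.ne).trans_eq ?_
  rw [volume_real_box (abs_nonneg T), abs_pow, abs_mul, abs_two]

lemma norm_setIntegral_box_le (T : ℝ) (f : APB k) :
    ‖∫ x in Set.Icc (fun _ => -T : Fin k → ℝ) (fun _ => T), f x‖ ≤ |(2 * T) ^ k| * ‖f‖ := by
  rw [mul_comm]
  refine (norm_setIntegral_le_of_norm_le_const isCompact_Icc.measure_lt_top
    fun x _ => f.norm_coe_le_norm x).trans ?_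
  gcongr
  exact volume_real_box_le T

/-- The mean over the box `[-T,T]^k`, as a bounded functional. -/
def boxMean (T : ℝ) : APB k →L[ℂ] ℂ :=
  LinearMap.mkContinuous
    { toFun f := (((2 * T) ^ k : ℝ) : ℂ)⁻¹ *
        ∫ x in Set.Icc (fun _ => -T : Fin k → ℝ) (fun _ => T), f x
      map_add' f g := by
        simp only [BoundedContinuousFunction.add_apply]
        rw [integral_add (integrableOn_box T f) (integrableOn_box T g), mul_add]
      map_smul' c f := by
        simp only [BoundedContinuousFunction.smul_apply, RingHom.id_apply]
        rw [integral_smul, mul_smul_comm] }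
    1 fun f => by
      refine (norm_mul _ _).trans_le ?_
      rw [norm_inv, Complex.norm_real, Real.norm_eq_abs, one_mul]
      exact inv_mul_le_of_le_mul₀ (abs_nonneg _) (norm_nonneg _) (norm_setIntegral_box_le T f)

lemma boxMean_apply (T : ℝ) (f : APB k) : boxMean T f = (((2 * T) ^ k : ℝ) : ℂ)⁻¹ *
    ∫ x in Set.Icc (fun _ => -T : Fin k → ℝ) (fun _ => T), f x := rfl

lemma norm_boxMean_le_one (T : ℝ) : ‖(boxMean T : APB k →L[ℂ] ℂ)‖ ≤ 1 :=
  LinearMap.mkContinuous_norm_le _ zero_le_one _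

lemma lipschitzWith_boxMean (k : ℕ) (T : ℝ) : LipschitzWith 1 (boxMean T : APB k → ℂ) :=
  (boxMean T).lipschitz.weaken (norm_boxMean_le_one T)

lemma bohrCoeff_eq_limUnder_boxMean (f : APB k) (lam : Fin k → ℝ) :
    bohrCoeff k f lam = limUnder atTop fun T => boxMean T (apExp k (-lam) * f) := by
  simp [bohrCoeff, boxMean_apply, apExp_apply]

/-- `f` has Bohr mean value `L`: its means over the boxes `[-T,T]^k` tend to `L`. -/
def HasMean (f : APB k) (L : ℂ) : Prop := Tendsto (fun T => boxMean T f) atTop (𝓝 L)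

namespace HasMean

variable {f g : APB k} {L M : ℂ}

lemma add (hf : HasMean f L) (hg : HasMean g M) : HasMean (f + g) (L + M) := by
  simpa only [HasMean, map_add] using Tendsto.add hf hg

lemma smul (hf : HasMean f L) (c : ℂ) : HasMean (c • f) (c * L) := by
  simpa only [HasMean, map_smul, smul_eq_mul] using Tendsto.const_mul c hf

lemma sub (hf : HasMean f L) (hg : HasMean g M) : HasMean (f - g) (L - M) := by
  simpa only [HasMean, map_sub] using Tendsto.sub hf hg

lemma sum {ι : Type*} {s : Finset ι} {f : ι → APB k} {L : ι → ℂ}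
    (h : ∀ i ∈ s, HasMean (f i) (L i)) : HasMean (∑ i ∈ s, f i) (∑ i ∈ s, L i) := by
  simpa only [HasMean, map_sum] using tendsto_finsetSum s h

lemma norm_le (hf : HasMean f L) : ‖L‖ ≤ ‖f‖ :=
  le_of_tendsto (Tendsto.norm hf) <| .of_forall fun T => by
    simpa using (boxMean T).le_of_opNorm_le (norm_boxMean_le_one T) f

end HasMean

lemma isClosed_setOf_hasMean (L : ℂ) : IsClosed {f : APB k | HasMean f L} :=
  (LipschitzWith.uniformEquicontinuous _ 1 (lipschitzWith_boxMean k)).equicontinuous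
    |>.isClosed_setOfPred_tendsto continuous_const

lemma isClosed_setOf_exists_hasMean : IsClosed {f : APB k | ∃ L, HasMean f L} := by
  have hlip : ∀ p : ℝ × ℝ,
      LipschitzWith (2 * 1) fun f : APB k => dist (boxMean p.1 f) (boxMean p.2 f) := fun p =>
    LipschitzWith.dist.comp <| by
      simpa using (lipschitzWith_boxMean k p.1).prodMk (lipschitzWith_boxMean k p.2)
  have hclosed := (LipschitzWith.uniformEquicontinuous _ _ hlip).equicontinuous
    |>.isClosed_setOfPred_tendsto (l := atTop) (continuous_const (y := (0 : ℝ)))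
  convert hclosed using 3 with f
  exact cauchy_map_iff_exists_tendsto.symm.trans cauchySeq_iff_tendsto_dist_atTop_0

lemma norm_integral_exp_le {a : ℝ} (ha : a ≠ 0) (s t : ℝ) :
    ‖∫ x in s..t, Complex.exp (Complex.I * ((a * x : ℝ) : ℂ))‖ ≤ 2 / |a| := by
  have hc : Complex.I * (a : ℂ) ≠ 0 := by simp [ha]
  have hfun : ∀ x : ℝ, Complex.I * ((a * x : ℝ) : ℂ) = Complex.I * a * x := fun x => by
    push_cast
    ring
  have hnorm : ∀ x : ℝ, ‖Complex.exp (Complex.I * a * x)‖ = 1 := fun x => by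
    rw [← hfun, mul_comm, Complex.norm_exp_ofReal_mul_I]
  simp only [hfun]
  rw [integral_exp_mul_complex hc, norm_div, norm_mul, Complex.norm_I, one_mul, Complex.norm_real,
    Real.norm_eq_abs]
  gcongr
  exact (norm_sub_le _ _).trans_eq (by rw [hnorm, hnorm, one_add_one_eq_two])

lemma tendsto_interval_mean_exp (a : ℝ) :
    Tendsto (fun T : ℝ => ((2 * T : ℝ) : ℂ)⁻¹ *
      ∫ x in Set.Icc (-T) T, Complex.exp (Complex.I * ((a * x : ℝ) : ℂ)))
      atTop (𝓝 (if a = 0 then 1 else 0)) := by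
  split_ifs with ha
  · refine tendsto_const_nhds.congr' ?_
    filter_upwards [eventually_gt_atTop 0] with T hT
    have hvol : volume.real (Set.Icc (-T) T) = 2 * T := by
      rw [Real.volume_real_Icc_of_le (by linarith)]
      ring
    have hne : ((2 * T : ℝ) : ℂ) ≠ 0 := by exact_mod_cast (by positivity : (2 * T : ℝ) ≠ 0)
    simp only [ha, zero_mul, Complex.ofReal_zero, mul_zero, Complex.exp_zero, setIntegral_const,
      hvol, Complex.real_smul, mul_one]
    exact (inv_mul_cancel₀ hne).symm
  · have hlim : Tendsto (fun T : ℝ => (2 * T)⁻¹ * (2 / |a|)) atTop (𝓝 0) := by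
      simpa using (tendsto_id.const_mul_atTop two_pos).inv_tendsto_atTop.mul_const (2 / |a|)
    refine squeeze_zero_norm' ?_ hlim
    filter_upwards [eventually_ge_atTop 0] with T hT
    rw [integral_Icc_eq_integral_Ioc, ← intervalIntegral.integral_of_le (by linarith), norm_mul,
      norm_inv, Complex.norm_real, Real.norm_of_nonneg (by positivity)]
    gcongr
    exact norm_integral_exp_le ha _ _

lemma boxMean_apExp (T : ℝ) (lam : Fin k → ℝ) :
    boxMean T (apExp k lam) = ∏ j, (((2 * T : ℝ) : ℂ)⁻¹ *
      ∫ x in Set.Icc (-T) T, Complex.exp (Complex.I * ((lam j * x : ℝ) : ℂ))) := by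
  have hprod : ∀ x : Fin k → ℝ, apExp k lam x =
      ∏ j, Complex.exp (Complex.I * ((lam j * x j : ℝ) : ℂ)) := fun x => by
    rw [apExp_apply, ← Complex.exp_sum, ← Finset.mul_sum, Complex.ofReal_sum]
  simp only [boxMean_apply, ← Set.pi_univ_Icc, volume_pi, Measure.restrict_pi_pi, hprod]
  rw [integral_fintype_prod_eq_prod
    (fun j (x : ℝ) => Complex.exp (Complex.I * ((lam j * x : ℝ) : ℂ))),
    Finset.prod_mul_distrib, Finset.prod_const, Finset.card_univ, Fintype.card_fin,
    Complex.ofReal_pow, inv_pow]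

lemma hasMean_apExp (lam : Fin k → ℝ) : HasMean (apExp k lam) (if lam = 0 then 1 else 0) := by
  have hlim : (if lam = 0 then (1 : ℂ) else 0) = ∏ j, (if lam j = 0 then (1 : ℂ) else 0) := by
    rw [Finset.prod_ite_zero]
    simp [funext_iff]
  simp only [HasMean, boxMean_apExp, hlim]
  exact tendsto_finsetProd _ fun j _ => tendsto_interval_mean_exp (lam j)

lemma exists_hasMean {f : APB k} (hf : f ∈ APalg k) : ∃ L, HasMean f L := by
  refine APalg_induction (fun lam => ⟨_, hasMean_apExp lam⟩) ?_ ?_ isClosed_setOf_exists_hasMean hf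
  · rintro f g ⟨L, hL⟩ ⟨M, hM⟩
    exact ⟨_, hL.add hM⟩
  · rintro c f ⟨L, hL⟩
    exact ⟨_, hL.smul c⟩

lemma hasMean_map_zero (Φ : APB k →L[ℂ] APB k) (hΦ : ∀ lam, HasMean (Φ (apExp k lam)) 0)
    {f : APB k} (hf : f ∈ APalg k) : HasMean (Φ f) 0 := by
  refine APalg_induction (P := fun f => HasMean (Φ f) 0) hΦ ?_ ?_
    ((isClosed_setOf_hasMean 0).preimage Φ.continuous) hf
  · intro f g hf hg
    simpa using hf.add hg
  · intro c f hf
    simpa using hf.smul c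

end Mean

section BohrCoefficients

lemma HasMean.bohrCoeff_eq {f : APB k} {lam : Fin k → ℝ} {L : ℂ}
    (h : HasMean (apExp k (-lam) * f) L) : bohrCoeff k f lam = L := by
  rw [bohrCoeff_eq_limUnder_boxMean]
  exact h.limUnder_eq

lemma hasMean_bohrCoeff {f : APB k} (hf : f ∈ APalg k) (lam : Fin k → ℝ) :
    HasMean (apExp k (-lam) * f) (bohrCoeff k f lam) := by
  obtain ⟨L, hL⟩ := exists_hasMean ((APalg k).mul_mem (apExp_mem_APalg (-lam)) hf)
  rwa [hL.bohrCoeff_eq]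

lemma bohrCoeff_add {f g : APB k} (hf : f ∈ APalg k) (hg : g ∈ APalg k) (lam : Fin k → ℝ) :
    bohrCoeff k (f + g : APB k) lam = bohrCoeff k f lam + bohrCoeff k g lam := by
  refine HasMean.bohrCoeff_eq ?_
  rw [mul_add]
  exact (hasMean_bohrCoeff hf lam).add (hasMean_bohrCoeff hg lam)

lemma bohrCoeff_smul (c : ℂ) {f : APB k} (hf : f ∈ APalg k) (lam : Fin k → ℝ) :
    bohrCoeff k (c • f : APB k) lam = c * bohrCoeff k f lam := by
  refine HasMean.bohrCoeff_eq ?_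
  rw [mul_smul_comm]
  exact (hasMean_bohrCoeff hf lam).smul c

lemma norm_bohrCoeff_le {f : APB k} (hf : f ∈ APalg k) (lam : Fin k → ℝ) :
    ‖bohrCoeff k f lam‖ ≤ ‖f‖ :=
  (hasMean_bohrCoeff hf lam).norm_le.trans <| by
    simpa [norm_apExp] using norm_mul_le (apExp k (-lam)) f

/-- The Bohr-Fourier coefficient at `lam` as a bounded functional on the almost periodic
functions. -/
def bohrCoeffCLM (lam : Fin k → ℝ) : APalg k →L[ℂ] ℂ :=
  LinearMap.mkContinuous
    { toFun f := bohrCoeff k (f : APB k) lam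
      map_add' f g := bohrCoeff_add f.2 g.2 lam
      map_smul' c f := bohrCoeff_smul c f.2 lam }
    1 fun f => (norm_bohrCoeff_le f.2 lam).trans_eq (one_mul ‖(f : APB k)‖).symm

lemma bohrCoeff_sum {ι : Type*} {s : Finset ι} {f : ι → APB k} (hf : ∀ i, f i ∈ APalg k)
    (lam : Fin k → ℝ) :
    bohrCoeff k (∑ i ∈ s, f i : APB k) lam = ∑ i ∈ s, bohrCoeff k (f i) lam := by
  refine HasMean.bohrCoeff_eq ?_
  rw [Finset.mul_sum]
  exact HasMean.sum fun i _ => hasMean_bohrCoeff (hf i) lam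

lemma mem_APalg_of_hasSum {ι : Type*} {f : ι → APB k} {g : APB k} (hf : ∀ i, f i ∈ APalg k)
    (hg : HasSum f g) : g ∈ APalg k :=
  isClosed_APalg.mem_of_tendsto hg (.of_forall fun _ => (APalg k).sum_mem fun i _ => hf i)

lemma hasSum_bohrCoeff {ι : Type*} {f : ι → APB k} {g : APB k} (hf : ∀ i, f i ∈ APalg k)
    (hg : HasSum f g) (lam : Fin k → ℝ) :
    HasSum (fun i => bohrCoeff k (f i) lam) (bohrCoeff k g lam) := by
  have hsub : HasSum (fun i => (⟨f i, hf i⟩ : APalg k)) ⟨g, mem_APalg_of_hasSum hf hg⟩ :=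
    (Topology.IsInducing.subtypeVal.hasSum_iff (g := (APalg k).val) _ _).1 hg
  exact hsub.mapL (bohrCoeffCLM lam)

lemma bohrCoeff_apExp (lam mu : Fin k → ℝ) :
    bohrCoeff k (apExp k lam) mu = if lam = mu then 1 else 0 := by
  refine HasMean.bohrCoeff_eq ?_
  have h := hasMean_apExp (-mu + lam)
  rwa [apExp_add, if_congr (neg_add_eq_zero.trans eq_comm) rfl rfl] at h

end BohrCoefficients

section Uniqueness

lemma le_re_boxMean {T δ : ℝ} (hT : 0 < T) {f : APB k} (hf : ∀ x, δ ≤ (f x).re) :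
    δ ≤ (boxMean T f).re := by
  have hpos : 0 < (2 * T) ^ k := by positivity
  have hint := integrableOn_box T f
  have h := setIntegral_ge_of_const_le (μ := volume) (f := fun x => RCLike.re (f x)) (c := δ)
    (measurableSet_Icc (a := (fun _ => -T : Fin k → ℝ)) (b := fun _ => T))
    isCompact_Icc.measure_lt_top.ne (fun x _ => hf x) hint.re
  rw [integral_re hint, volume_real_box hT.le, smul_eq_mul] at h
  rw [boxMean_apply, ← Complex.ofReal_inv, Complex.re_ofReal_mul, le_inv_mul_iff₀ hpos]
  exact h

lemma HasMean.le_re {f : APB k} {L : ℂ} {δ : ℝ} (h : HasMean f L) (hf : ∀ x, δ ≤ (f x).re) :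
    δ ≤ L.re :=
  ge_of_tendsto ((Complex.continuous_re.tendsto _).comp h)
    ((eventually_gt_atTop 0).mono fun _ hT => le_re_boxMean hT hf)

/-- The reflection `f ↦ f (y - ·)`. -/
def reflect (y : Fin k → ℝ) : APB k →L[ℂ] APB k :=
  BoundedContinuousFunction.compContinuousCLM ℂ ℂ ⟨fun x => y - x, by fun_prop⟩

lemma reflect_apply (y : Fin k → ℝ) (f : APB k) (x : Fin k → ℝ) : reflect y f x = f (y - x) := rfl

lemma lipschitzWith_reflect (y : Fin k → ℝ) : LipschitzWith 1 (reflect y) :=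
  (reflect y).lipschitz.weaken (BoundedContinuousFunction.norm_compContinuousCLM_le_one _)

lemma reflect_apExp (y lam : Fin k → ℝ) :
    reflect y (apExp k lam) = apExp k lam y • apExp k (-lam) := by
  ext x
  exact apExp_apply_sub lam x y

lemma hasMean_reflect {f : APB k} (hf : f ∈ APalg k) {L : ℂ} (hL : HasMean f L)
    (y : Fin k → ℝ) : HasMean (reflect y f) L := by
  have hdiff : HasMean ((ContinuousLinearMap.id ℂ (APB k) - reflect y) f) 0 := by
    refine hasMean_map_zero _ (fun lam => ?_) hf
    have h := (hasMean_apExp lam).sub ((hasMean_apExp (-lam)).smul (apExp k lam y))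
    have hz : (if lam = 0 then (1 : ℂ) else 0) -
        apExp k lam y * (if -lam = 0 then (1 : ℂ) else 0) = 0 := by
      by_cases hlam : lam = 0
      · simp [hlam, apExp_zero]
      · simp [hlam]
    rw [hz, ← reflect_apExp] at h
    exact h
  simpa using hL.sub hdiff

lemma isClosed_setOf_totallyBounded_range {ι X Y : Type*} [TopologicalSpace X]
    [PseudoMetricSpace Y] {F : ι → X → Y} (hF : Equicontinuous F) :
    IsClosed {x | TotallyBounded (Set.range (F · x))} := by
  refine isClosed_of_closure_subset fun x hx => Metric.totallyBounded_iff.2 fun ε hε => ?_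
  obtain ⟨p, hp, hxp⟩ := ((mem_closure_iff_frequently.1 hx).and_eventually
    (Metric.equicontinuousAt_iff_right.1 (hF x) (ε / 2) (half_pos hε))).exists
  obtain ⟨t, ht, hcov⟩ := Metric.totallyBounded_iff.1 hp (ε / 2) (half_pos hε)
  refine ⟨t, ht, ?_⟩
  rintro _ ⟨i, rfl⟩
  obtain ⟨q, hq, hiq⟩ := Set.mem_iUnion₂.1 (hcov ⟨i, rfl⟩)
  refine Set.mem_iUnion₂.2 ⟨q, hq, ?_⟩
  rw [Metric.mem_ball] at hiq ⊢
  linarith [dist_triangle (F i x) (F i p) q, hxp i]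

lemma totallyBounded_range_reflect {f : APB k} (hf : f ∈ APalg k) :
    TotallyBounded (Set.range (reflect · f)) := by
  have hclosed := isClosed_setOf_totallyBounded_range
    (LipschitzWith.uniformEquicontinuous _ 1 (lipschitzWith_reflect (k := k))).equicontinuous
  refine APalg_induction ?_ ?_ ?_ hclosed hf
  · intro lam
    have hK : IsCompact ((fun z : ℂ => z • apExp k (-lam)) '' Metric.closedBall 0 1) :=
      (isCompact_closedBall 0 1).image (by fun_prop)
    refine hK.totallyBounded.subset (Set.range_subset_iff.2 fun y => ?_)
    exact ⟨apExp k lam y, by simp [norm_apExp_apply], (reflect_apExp y lam).symm⟩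
  · intro f g hf hg
    have hK := (hf.closure.isCompact_of_isClosed isClosed_closure).add
      (hg.closure.isCompact_of_isClosed isClosed_closure)
    refine hK.totallyBounded.subset (Set.range_subset_iff.2 fun y => ?_)
    exact Set.mem_add.2 ⟨_, subset_closure ⟨y, rfl⟩, _, subset_closure ⟨y, rfl⟩,
      (map_add (reflect y) f g).symm⟩
  · intro c f hf
    refine (hf.image (uniformContinuous_const_smul c)).subset (Set.range_subset_iff.2 fun y => ?_)
    exact ⟨_, ⟨y, rfl⟩, (map_smul (reflect y) c f).symm⟩

/-- Bohr's theorem that the value `f x₀` is approximately attained on a relatively dense set. -/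
lemma exists_finset_norm_sub_lt {f : APB k} (hf : f ∈ APalg k) (x₀ : Fin k → ℝ) {ε : ℝ}
    (hε : 0 < ε) : ∃ t : Finset (Fin k → ℝ), ∀ x, ∃ y ∈ t, ‖f x₀ - f (y - x)‖ < ε := by
  classical
  obtain ⟨s, hcov⟩ : ∃ s : Finset (Fin k → ℝ),
      ∀ x, ∃ y ∈ s, dist (reflect x f) (reflect y f) < ε := by
    obtain ⟨t, htsub, htfin, hcov⟩ :=
      Metric.finite_approx_of_totallyBounded (totallyBounded_range_reflect hf) ε hε
    rw [← Set.image_univ] at htsub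
    obtain ⟨s, -, hs, rfl⟩ := htfin.exists_subset_finite_image_eq htsub
    exact ⟨hs.toFinset, fun x => by simpa using hcov ⟨x, rfl⟩⟩
  refine ⟨s.image (· + x₀), fun x => ?_⟩
  obtain ⟨y, hy, hxy⟩ := hcov x
  refine ⟨y + x₀, Finset.mem_image_of_mem _ hy, ?_⟩
  have h := (BoundedContinuousFunction.dist_coe_le_dist (x - x₀)).trans_lt hxy
  rwa [reflect_apply, reflect_apply, sub_sub_cancel, dist_eq_norm,
    show y - (x - x₀) = y + x₀ - x by abel] at h

lemma re_eq_zero_of_hasMean_zero {f : APB k} (hf : f ∈ APalg k) (hmean : HasMean f 0)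
    (hnonneg : ∀ x, 0 ≤ (f x).re) (x₀ : Fin k → ℝ) : (f x₀).re = 0 := by
  by_contra hne
  have hδ : 0 < (f x₀).re := (hnonneg x₀).lt_of_ne' hne
  obtain ⟨t, ht⟩ := exists_finset_norm_sub_lt hf x₀ (half_pos hδ)
  have hmean_sum : HasMean (∑ y ∈ t, reflect y f) 0 := by
    simpa using HasMean.sum (s := t) fun y _ => hasMean_reflect hf hmean y
  have hlow : ∀ x, (f x₀).re / 2 ≤ ((∑ y ∈ t, reflect y f) x).re := by
    intro x
    obtain ⟨y, hy, hxy⟩ := ht x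
    have hre : (f x₀).re / 2 ≤ (f (y - x)).re := by
      have h := ((Complex.re_le_norm _).trans_lt hxy).le
      rw [Complex.sub_re] at h
      linarith
    rw [BoundedContinuousFunction.sum_apply, Complex.re_sum]
    exact hre.trans (Finset.single_le_sum (f := fun y => (f (y - x)).re)
      (fun z _ => hnonneg (z - x)) hy)
  linarith [hmean_sum.le_re hlow, Complex.zero_re]

lemma eq_zero_of_hasMean_star_mul_self {f : APB k} (hf : f ∈ APalg k)
    (h : HasMean (star f * f) 0) : f = 0 := by
  have hval : ∀ x, ((star f * f) x).re = ‖f x‖ ^ 2 := by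
    intro x
    rw [BoundedContinuousFunction.mul_apply, BoundedContinuousFunction.star_apply,
      RCLike.star_def, Complex.conj_mul']
    norm_cast
  ext x
  have hx := re_eq_zero_of_hasMean_zero ((APalg k).mul_mem (star_mem_APalg hf) hf) h
    (fun x => (hval x).ge.trans' (sq_nonneg _)) x
  rwa [hval, sq_eq_zero_iff, norm_eq_zero] at hx

lemma eq_zero_of_bohrCoeff_eq_zero {f : APB k} (hf : f ∈ APalg k)
    (h : ∀ lam, bohrCoeff k f lam = 0) : f = 0 := by
  refine eq_zero_of_hasMean_star_mul_self hf ?_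
  rw [mul_comm]
  refine hasMean_map_zero (ContinuousLinearMap.mul ℂ (APB k) f) (fun lam => ?_) (star_mem_APalg hf)
  have hmean := hasMean_bohrCoeff hf (-lam)
  rwa [h, neg_neg, mul_comm] at hmean

lemma ext_bohrCoeff {f g : APB k} (hf : f ∈ APalg k) (hg : g ∈ APalg k)
    (h : ∀ lam, bohrCoeff k f lam = bohrCoeff k g lam) : f = g := by
  rw [← sub_eq_zero]
  refine eq_zero_of_bohrCoeff_eq_zero ((APalg k).sub_mem hf hg) fun lam => ?_
  have hsub := map_sub (bohrCoeffCLM lam) ⟨f, hf⟩ ⟨g, hg⟩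
  exact hsub.trans (sub_eq_zero.2 (h lam))

end Uniqueness

section WienerNorm

lemma mem_bohrSpectrum {f : (Fin k → ℝ) → ℂ} {lam : Fin k → ℝ} :
    lam ∈ bohrSpectrum k f ↔ bohrCoeff k f lam ≠ 0 := Iff.rfl

lemma wienerNorm_smul (c : ℂ) {f : APB k} (hf : f ∈ APalg k) :
    wienerNorm k (c • f : APB k) = ‖c‖ * wienerNorm k f := by
  simp only [wienerNorm, bohrCoeff_smul c hf, norm_mul, tsum_mul_left]

lemma wienerNorm_apExp (lam : Fin k → ℝ) : wienerNorm k (apExp k lam) = 1 := by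
  simp only [wienerNorm, bohrCoeff_apExp, apply_ite norm, norm_one, norm_zero,
    eq_comm (a := lam), tsum_ite_eq]

lemma wienerNorm_smul_apExp (c : ℂ) (lam : Fin k → ℝ) :
    wienerNorm k (c • apExp k lam : APB k) = ‖c‖ := by
  rw [wienerNorm_smul c (apExp_mem_APalg lam), wienerNorm_apExp, mul_one]

variable {A : Set (Fin k → ℝ)}

lemma apwmem_apExp {lam : Fin k → ℝ} (hlam : lam ∈ A) : APWmem k A (apExp k lam) := by
  refine ⟨⟨apExp_mem_APalg lam, fun mu hmu => ?_⟩, ?_⟩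
  · rw [mem_bohrSpectrum, bohrCoeff_apExp, ite_ne_right_iff] at hmu
    exact hmu.1 ▸ hlam
  · refine (hasSum_ite_eq lam (1 : ℝ)).summable.congr fun mu => ?_
    rw [bohrCoeff_apExp, apply_ite norm, norm_one, norm_zero, if_congr eq_comm rfl rfl]

namespace APWmem

lemma smul {f : APB k} (hf : APWmem k A f) (c : ℂ) : APWmem k A (c • f) := by
  obtain ⟨⟨hmem, hspec⟩, hsum⟩ := hf
  refine ⟨⟨(APalg k).smul_mem hmem c, fun lam hlam => hspec ?_⟩, ?_⟩
  · rw [mem_bohrSpectrum, bohrCoeff_smul c hmem] at hlam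
    exact right_ne_zero_of_mul hlam
  · simpa only [bohrCoeff_smul c hmem, norm_mul] using hsum.mul_left ‖c‖

lemma zero : APWmem k A 0 :=
  ⟨⟨(APalg k).zero_mem, fun lam hlam => (hlam (map_zero (bohrCoeffCLM lam))).elim⟩, by
    have h : ∀ lam, bohrCoeff k (0 : APB k) lam = 0 := fun lam => map_zero (bohrCoeffCLM lam)
    simpa only [h, norm_zero] using summable_zero⟩

lemma of_hasSum {ι : Type*} {f : ι → APB k} {g : APB k} (hf : ∀ i, APWmem k A (f i))
    (hs : Summable fun i => wienerNorm k (f i)) (hg : HasSum f g) :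
    APWmem k A g ∧ wienerNorm k g ≤ ∑' i, wienerNorm k (f i) := by
  have hmem : ∀ i, f i ∈ APalg k := fun i => (hf i).1.1
  have hcoeff := hasSum_bohrCoeff hmem hg
  have hprod : Summable fun p : ι × (Fin k → ℝ) => ‖bohrCoeff k (f p.1) p.2‖ :=
    (summable_prod_of_nonneg fun _ => norm_nonneg _).2 ⟨fun i => (hf i).2, hs⟩
  have hle : ∀ lam, ‖bohrCoeff k g lam‖ ≤ ∑' i, ‖bohrCoeff k (f i) lam‖ := fun lam =>
    (hcoeff lam).norm_le_of_bounded (hprod.prod_symm.prod_factor lam).hasSum fun _ => le_rfl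
  have hsum : Summable fun lam => ‖bohrCoeff k g lam‖ :=
    hprod.prod_symm.prod.of_nonneg_of_le (fun _ => norm_nonneg _) hle
  refine ⟨⟨⟨mem_APalg_of_hasSum hmem hg, fun lam hlam => ?_⟩, hsum⟩, ?_⟩
  · by_contra hA
    have hzero : ∀ i, bohrCoeff k (f i) lam = 0 := fun i => of_not_not fun h => hA ((hf i).1.2 h)
    refine hlam ((hcoeff lam).unique ?_)
    simpa only [hzero] using hasSum_zero
  · exact (hsum.tsum_le_tsum hle hprod.prod_symm.prod).trans_eq
      (Summable.tsum_comm (f := fun i lam => ‖bohrCoeff k (f i) lam‖) hprod)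

lemma add_and_wienerNorm_add_le {f g : APB k} (hf : APWmem k A f) (hg : APWmem k A g) :
    APWmem k A (f + g) ∧ wienerNorm k (f + g : APB k) ≤ wienerNorm k f + wienerNorm k g := by
  have hsum := hasSum_fintype ![f, g]
  rw [Fin.sum_univ_two] at hsum
  have h := of_hasSum (A := A) (Fin.forall_fin_two.2 ⟨hf, hg⟩) (hasSum_fintype _).summable hsum
  rwa [tsum_fintype, Fin.sum_univ_two] at h

lemma hasSum {f : APB k} (hf : APWmem k A f) :
    HasSum (fun lam => bohrCoeff k f lam • apExp k lam) f := by
  have hs : Summable fun lam => bohrCoeff k f lam • apExp k lam :=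
    hf.2.of_norm_bounded fun lam => by rw [norm_smul, norm_apExp, mul_one]
  obtain ⟨g, hg⟩ := hs
  have hterm := fun lam => (APalg k).smul_mem (apExp_mem_APalg lam) (bohrCoeff k f lam)
  convert hg
  refine ext_bohrCoeff hf.1.1 (mem_APalg_of_hasSum hterm hg) fun mu =>
    HasSum.unique ?_ (hasSum_bohrCoeff hterm hg mu)
  simp only [bohrCoeff_smul _ (apExp_mem_APalg _), bohrCoeff_apExp, mul_boole]
  have hsingle := hasSum_single (f := fun lam => if lam = mu then bohrCoeff k f lam else 0) mu
    fun _ h => if_neg h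
  rwa [if_pos rfl] at hsingle

lemma norm_le_wienerNorm {f : APB k} (hf : APWmem k A f) : ‖f‖ ≤ wienerNorm k f :=
  hf.hasSum.norm_le_of_bounded hf.2.hasSum fun lam => by rw [norm_smul, norm_apExp, mul_one]

lemma mul_and_wienerNorm_mul_le {A : AddSubmonoid (Fin k → ℝ)} {f g : APB k} (hf : APWmem k A f)
    (hg : APWmem k A g) :
    APWmem k A (f * g) ∧ wienerNorm k (f * g : APB k) ≤ wienerNorm k f * wienerNorm k g := by
  have hnorm : Summable fun p : (Fin k → ℝ) × (Fin k → ℝ) =>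
      ‖bohrCoeff k f p.1‖ * ‖bohrCoeff k g p.2‖ :=
    hf.2.mul_of_nonneg hg.2 (fun _ => norm_nonneg _) fun _ => norm_nonneg _
  have hterm : ∀ p : (Fin k → ℝ) × (Fin k → ℝ),
      bohrCoeff k f p.1 • apExp k p.1 * bohrCoeff k g p.2 • apExp k p.2 =
        (bohrCoeff k f p.1 * bohrCoeff k g p.2) • apExp k (p.1 + p.2) := fun p => by
    rw [smul_mul_smul_comm, apExp_add]
  have hwn : ∀ p : (Fin k → ℝ) × (Fin k → ℝ),
      wienerNorm k ((bohrCoeff k f p.1 * bohrCoeff k g p.2) • apExp k (p.1 + p.2) : APB k) =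
        ‖bohrCoeff k f p.1‖ * ‖bohrCoeff k g p.2‖ := fun p => by
    rw [wienerNorm_smul_apExp, norm_mul]
  have hsum := hf.hasSum.mul hg.hasSum <| hnorm.of_norm_bounded fun p => by
    rw [hterm, norm_smul, norm_apExp, mul_one, norm_mul]
  simp only [hterm] at hsum
  have h := of_hasSum (A := (A : Set (Fin k → ℝ))) (fun p => ?_) (by simpa only [hwn]) hsum
  · simp only [hwn] at h
    rwa [← hf.2.tsum_mul_tsum hg.2 hnorm] at h
  · by_cases hp : bohrCoeff k f p.1 * bohrCoeff k g p.2 = 0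
    · rw [hp, zero_smul]
      exact zero
    · exact (apwmem_apExp (A.add_mem (hf.1.2 (left_ne_zero_of_mul hp))
        (hg.1.2 (right_ne_zero_of_mul hp)))).smul _

end APWmem

end WienerNorm

section WienerAlgebra

/-- The algebra `APW^k_A` as a subalgebra of the bounded continuous functions, for a submonoid `A`
of frequencies. -/
def wienerSubalgebra (A : AddSubmonoid (Fin k → ℝ)) : Subalgebra ℂ (APB k) where
  carrier := {f | APWmem k A f}
  add_mem' hf hg := (hf.add_and_wienerNorm_add_le hg).1
  mul_mem' hf hg := (hf.mul_and_wienerNorm_mul_le hg).1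
  algebraMap_mem' c := by
    rw [Algebra.algebraMap_eq_smul_one, ← apExp_zero]
    exact (apwmem_apExp A.zero_mem).smul c

/-- The algebra `APW^k_A` with the Wiener norm. It is a type synonym of `wienerSubalgebra A`, which
carries the uniform norm. -/
def WienerAlgebra (A : AddSubmonoid (Fin k → ℝ)) : Type := wienerSubalgebra A

variable {A : AddSubmonoid (Fin k → ℝ)}

namespace WienerAlgebra

/-- The Wiener norm as a ring norm on `wienerSubalgebra A`. -/
def ringNorm (A : AddSubmonoid (Fin k → ℝ)) : RingNorm (wienerSubalgebra A) where
  toFun f := wienerNorm k (f : APB k)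
  map_zero' := by simpa using wienerNorm_smul 0 (APalg k).zero_mem
  add_le' f g := (f.2.add_and_wienerNorm_add_le g.2).2
  neg' f := by simpa using wienerNorm_smul (-1) f.2.1.1
  mul_le' f g := (f.2.mul_and_wienerNorm_mul_le g.2).2
  eq_zero_of_map_eq_zero' f hf := Subtype.ext <|
    norm_le_zero_iff.1 (f.2.norm_le_wienerNorm.trans_eq hf)

instance : CommRing (WienerAlgebra A) := inferInstanceAs (CommRing (wienerSubalgebra A))

instance : Algebra ℂ (WienerAlgebra A) := inferInstanceAs (Algebra ℂ (wienerSubalgebra A))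

instance : NormedCommRing (WienerAlgebra A) where
  __ := (inferInstance : CommRing (WienerAlgebra A))
  __ := (ringNorm A).toNormedRing

instance : NormedAlgebra ℂ (WienerAlgebra A) where
  norm_smul_le c f := (wienerNorm_smul c (f : wienerSubalgebra A).2.1.1).le

/-- The inclusion of the Wiener algebra into the bounded continuous functions. -/
def val (A : AddSubmonoid (Fin k → ℝ)) : WienerAlgebra A →ₐ[ℂ] APB k := (wienerSubalgebra A).val

lemma val_injective : Function.Injective (val A) := Subtype.val_injective

lemma apwmem_val (f : WienerAlgebra A) : APWmem k A (val A f) := f.2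

lemma exists_val_eq {f : APB k} (hf : APWmem k A f) : ∃ g, val A g = f := ⟨⟨f, hf⟩, rfl⟩

lemma norm_val_le (f : WienerAlgebra A) : ‖val A f‖ ≤ ‖f‖ := (apwmem_val f).norm_le_wienerNorm

lemma norm_le_tsum_of_hasSum_val {ι : Type*} {f : ι → WienerAlgebra A} {g : WienerAlgebra A}
    (hs : Summable fun i => ‖f i‖) (hg : HasSum (fun i => val A (f i)) (val A g)) :
    ‖g‖ ≤ ∑' i, ‖f i‖ :=
  (APWmem.of_hasSum (fun i => apwmem_val (f i)) hs hg).2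

lemma hasSum_of_hasSum_val {ι : Type*} {f : ι → WienerAlgebra A} {g : WienerAlgebra A}
    (hs : Summable fun i => ‖f i‖) (hg : HasSum (fun i => val A (f i)) (val A g)) :
    HasSum f g := by
  have htail : ∀ s : Finset ι, ‖∑ i ∈ s, f i - g‖ ≤ ∑' i : { i // i ∉ s }, ‖f i‖ := fun s => by
    rw [norm_sub_rev]
    refine norm_le_tsum_of_hasSum_val (hs.subtype _) ?_
    refine (Finset.hasSum_compl_iff (f := fun i => val A (f i)) s).2 ?_
    rwa [map_sub, map_sum, sub_add_cancel]
  exact tendsto_iff_norm_sub_tendsto_zero.2 <|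
    squeeze_zero (fun _ => norm_nonneg _) htail (tendsto_tsum_compl_atTop_zero fun i => ‖f i‖)

instance : CompleteSpace (WienerAlgebra A) := by
  refine NormedAddCommGroup.completeSpace_of_summable_imp_tendsto fun u hu => ?_
  obtain ⟨f, hf⟩ : Summable fun n => val A (u n) := hu.of_norm_bounded fun n => norm_val_le (u n)
  obtain ⟨g, rfl⟩ := exists_val_eq (APWmem.of_hasSum (fun n => apwmem_val (u n)) hu hf).1
  exact ⟨g, (hasSum_of_hasSum_val hu hf).tendsto_sum_nat⟩

/-- The exponentials with frequency in `A`, as a character of `A` with values in the Wiener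
algebra. -/
def expHom (A : AddSubmonoid (Fin k → ℝ)) : Multiplicative A →* WienerAlgebra A :=
  (apExpHom k).comp (AddMonoidHom.toMultiplicative A.subtype) |>.codRestrict
    (wienerSubalgebra A).toSubmonoid fun lam => apwmem_apExp lam.toAdd.2

lemma val_expHom (lam : Multiplicative A) : val A (expHom A lam) = apExp k lam.toAdd := rfl

lemma norm_expHom (lam : Multiplicative A) : ‖expHom A lam‖ = 1 := wienerNorm_apExp _

instance : NormOneClass (WienerAlgebra A) := ⟨by rw [← map_one (expHom A), norm_expHom]⟩

instance : Nontrivial (WienerAlgebra A) := NormOneClass.nontrivial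

/-- The trigonometric polynomial with given coefficients. -/
def trigPoly (A : AddSubmonoid (Fin k → ℝ)) : AddMonoidAlgebra ℂ A →ₐ[ℂ] WienerAlgebra A :=
  AddMonoidAlgebra.lift ℂ (WienerAlgebra A) A (expHom A)

lemma denseRange_trigPoly : DenseRange (trigPoly A) := by
  intro f
  have hcoeff := (apwmem_val f).1.2
  have hsupp : Function.support (fun lam => bohrCoeff k (val A f) lam • apExp k lam) ⊆ A :=
    fun lam hlam => hcoeff fun h => hlam (by simp only [h, zero_smul])
  have hval := (hasSum_subtype_iff_of_support_subset hsupp).2 (apwmem_val f).hasSum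
  have hsum : HasSum (fun lam : A => bohrCoeff k (val A f) lam • expHom A (.ofAdd lam)) f := by
    refine hasSum_of_hasSum_val ?_ hval
    simp only [norm_smul, norm_expHom, mul_one]
    exact (apwmem_val f).2.subtype _
  refine mem_closure_of_tendsto hsum (.of_forall fun s => ?_)
  refine ⟨∑ lam ∈ s, AddMonoidAlgebra.single lam (bohrCoeff k (val A f) lam), ?_⟩
  simp only [trigPoly, map_sum, AddMonoidAlgebra.lift_single]

lemma bohrCoeff_val_sum_smul_expHom {ι : Type*} {s : Finset ι} {lam : ι → A}
    (hlam : Function.Injective lam) (c : ι → ℂ) {i : ι} (hi : i ∈ s) :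
    bohrCoeff k (val A (∑ j ∈ s, c j • expHom A (.ofAdd (lam j)))) (lam i) = c i := by
  classical
  simp only [map_sum, map_smul, val_expHom, toAdd_ofAdd]
  rw [bohrCoeff_sum fun j => (APalg k).smul_mem (apExp_mem_APalg _) _]
  simp only [bohrCoeff_smul _ (apExp_mem_APalg _), bohrCoeff_apExp, Subtype.val_inj, hlam.eq_iff,
    mul_boole, Finset.sum_ite_eq', if_pos hi]

lemma sum_norm_bohrCoeff_le (f : WienerAlgebra A) (s : Finset (Fin k → ℝ)) :
    ∑ mu ∈ s, ‖bohrCoeff k (val A f) mu‖ ≤ ‖f‖ :=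
  (apwmem_val f).2.sum_le_tsum s fun _ _ => norm_nonneg _

lemma sum_norm_le_norm_sum_smul_expHom {ι : Type*} (s : Finset ι) {lam : ι → A}
    (hlam : Function.Injective lam) (c : ι → ℂ) :
    ∑ i ∈ s, ‖c i‖ ≤ ‖∑ i ∈ s, c i • expHom A (.ofAdd (lam i))‖ := by
  refine (Finset.sum_congr rfl fun i hi => ?_).trans_le <| (Finset.sum_map s
    ⟨_, Subtype.val_injective.comp hlam⟩ _).symm.trans_le (sum_norm_bohrCoeff_le _ _)
  exact congrArg norm (bohrCoeff_val_sum_smul_expHom hlam c hi).symm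

end WienerAlgebra

end WienerAlgebra

section Dilations

/-- The elements of `M` that vanish or on which the additive functional `ω` is positive. -/
def posSubmonoid {M : Type*} [AddCommMonoid M] (ω : M →+ ℝ) : AddSubmonoid M where
  carrier := {x | x = 0 ∨ 0 < ω x}
  zero_mem' := .inl rfl
  add_mem' := by
    rintro x y (rfl | hx) (rfl | hy)
    · simp
    · simp [hy]
    · simp [hx]
    · exact .inr ((add_pos hx hy).trans_eq (map_add ω x y).symm)

lemma posSubmonoid_nonneg {M : Type*} [AddCommMonoid M] {ω : M →+ ℝ} (x : posSubmonoid ω) :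
    0 ≤ ω x := by
  obtain h | h := x.2
  · rw [h, map_zero]
  · exact h.le

open WienerAlgebra

variable {A : AddSubmonoid (Fin k → ℝ)} {ω : A →+ ℝ}

/-- The homomorphism `e_λ ↦ s ^ ω(λ) e_λ` on the trigonometric polynomials whose nonzero
frequencies satisfy `ω(λ) > 0`. At `s = 0` it extracts the constant term. -/
def dilation (ω : A →+ ℝ) (s : unitInterval) :
    AddMonoidAlgebra ℂ (posSubmonoid ω) →ₐ[ℂ] WienerAlgebra A :=
  AddMonoidAlgebra.lift ℂ (WienerAlgebra A) (posSubmonoid ω)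
    { toFun lam := (((s : ℝ) ^ ω lam.toAdd : ℝ) : ℂ) • expHom A (.ofAdd lam.toAdd)
      map_one' := by simp
      map_mul' lam mu := by
        rw [smul_mul_smul_comm, ← map_mul, ← Complex.ofReal_mul, ← Real.rpow_add_of_nonneg s.2.1
          (posSubmonoid_nonneg lam.toAdd) (posSubmonoid_nonneg mu.toAdd), ← map_add]
        rfl }

lemma dilation_apply (s : unitInterval) (x : AddMonoidAlgebra ℂ (posSubmonoid ω)) :
    dilation ω s x = ∑ lam ∈ x.coeff.support,
      x.coeff lam • (((s : ℝ) ^ ω lam : ℝ) : ℂ) • expHom A (.ofAdd lam) := by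
  rw [dilation, AddMonoidAlgebra.lift_apply]
  rfl

lemma dilation_one_apply (x : AddMonoidAlgebra ℂ (posSubmonoid ω)) :
    dilation ω 1 x = ∑ lam ∈ x.coeff.support, x.coeff lam • expHom A (.ofAdd lam) := by
  simp only [dilation_apply, Set.Icc.coe_one, Real.one_rpow, Complex.ofReal_one, one_smul]

lemma dilation_zero_apply (x : AddMonoidAlgebra ℂ (posSubmonoid ω)) :
    dilation ω 0 x = algebraMap ℂ _ (x.coeff 0) := by
  rw [dilation_apply, Finset.sum_eq_single 0]
  · simp [Algebra.algebraMap_eq_smul_one]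
  · intro lam _ hlam
    have hpos : 0 < ω lam := lam.2.resolve_left fun h => hlam (Subtype.ext h)
    simp [Real.zero_rpow hpos.ne']
  · intro h
    simp [Finsupp.notMem_support_iff.1 h]

lemma norm_dilation_le (s : unitInterval) (x : AddMonoidAlgebra ℂ (posSubmonoid ω)) :
    ‖dilation ω s x‖ ≤ ‖dilation ω 1 x‖ := by
  rw [dilation_apply, dilation_one_apply]
  refine (norm_sum_le_of_le _ fun lam _ => ?_).trans
    (sum_norm_le_norm_sum_smul_expHom _ Subtype.val_injective _)
  rw [norm_smul, norm_smul, norm_expHom, mul_one, Complex.norm_real,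
    Real.norm_of_nonneg (Real.rpow_nonneg s.2.1 _)]
  exact mul_le_of_le_one_right (norm_nonneg _)
    (Real.rpow_le_one s.2.1 s.2.2 (posSubmonoid_nonneg lam))

lemma continuous_dilation (x : AddMonoidAlgebra ℂ (posSubmonoid ω)) :
    Continuous fun s => dilation ω s x := by
  simp only [dilation_apply]
  refine continuous_finsetSum _ fun lam _ => ?_
  have hpow : Continuous fun s : unitInterval => (((s : ℝ) ^ ω lam : ℝ) : ℂ) :=
    Complex.continuous_ofReal.comp
      ((Real.continuous_rpow_const (posSubmonoid_nonneg lam)).comp continuous_subtype_val)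
  exact (hpow.smul continuous_const).const_smul (x.coeff lam)

lemma trigPoly_mem_range_dilation {x : AddMonoidAlgebra ℂ A}
    (hx : ∀ lam ∈ x.coeff.support, lam ∈ posSubmonoid ω) :
    trigPoly A x ∈ (dilation ω 1).range := by
  rw [trigPoly, AddMonoidAlgebra.lift_apply]
  refine Subalgebra.sum_mem _ fun lam hlam => Subalgebra.smul_mem _ ?_ _
  exact ⟨AddMonoidAlgebra.single ⟨lam, hx lam hlam⟩ 1, by simp [dilation]⟩

variable {n : Type*} [Fintype n]

lemma dilation_comp_dotProduct (s : unitInterval)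
    (x y : n → AddMonoidAlgebra ℂ (posSubmonoid ω)) :
    (dilation ω s ∘ x) ⬝ᵥ (dilation ω s ∘ y) = dilation ω s (x ⬝ᵥ y) := by
  simp only [dotProduct, map_sum, map_mul, Function.comp_apply]

lemma isUnimodular_dilation {x y : n → AddMonoidAlgebra ℂ (posSubmonoid ω)}
    (h : ‖1 - dilation ω 1 (x ⬝ᵥ y)‖ < 1) (s : unitInterval) :
    IsUnimodular (dilation ω s ∘ x) := by
  refine isUnimodular_of_isUnit_dotProduct (b := dilation ω s ∘ y) ?_
  have hs : ‖1 - dilation ω s (x ⬝ᵥ y)‖ < 1 := by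
    rw [← map_one (dilation ω 1), ← map_sub] at h
    rw [← map_one (dilation ω s), ← map_sub]
    exact (norm_dilation_le s _).trans_lt h
  rw [dilation_comp_dotProduct, ← sub_sub_cancel 1 (dilation ω s (x ⬝ᵥ y))]
  exact isUnit_one_sub_of_norm_lt_one hs

variable [DecidableEq n]

/-- The dilations deform the row into a row of constants through unimodular rows. -/
lemma rowEquiv_dilation_single {x y : n → AddMonoidAlgebra ℂ (posSubmonoid ω)}
    (h : ‖1 - dilation ω 1 (x ⬝ᵥ y)‖ < 1) (i : n) :
    RowEquiv (dilation ω 1 ∘ x) (Pi.single i 1) := by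
  have hcont : Continuous fun s => dilation ω s ∘ x :=
    continuous_pi fun j => continuous_dilation (x j)
  have hdeform : RowEquiv (dilation ω 1 ∘ x) (dilation ω 0 ∘ x) :=
    rowEquiv_of_isPreconnected (isPreconnected_range hcont)
      (Set.forall_mem_range.2 (isUnimodular_dilation h)) ⟨1, rfl⟩ ⟨0, rfl⟩
  have hconst : dilation ω 0 ∘ x = algebraMap ℂ (WienerAlgebra A) ∘ fun j => (x j).coeff 0 :=
    funext fun j => dilation_zero_apply (x j)
  rw [hconst] at hdeform
  refine hdeform.trans (RowEquiv.single_of_algebraMap (fun hzero => ?_) i)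
  obtain ⟨b, hb⟩ := isUnimodular_dilation h 0
  rw [hconst, hzero, Pi.comp_zero, map_zero] at hb
  exact zero_ne_one ((zero_dotProduct b).symm.trans hb)

end Dilations

section Hermite

open WienerAlgebra

lemma exists_forall_pos_of_zero_notMem_convexHull {E : Type*} [AddCommGroup E] [Module ℝ E]
    [TopologicalSpace E] [IsTopologicalAddGroup E] [ContinuousSMul ℝ E] [LocallyConvexSpace ℝ E]
    [T2Space E] {s : Set E} (hs : s.Finite) (h : 0 ∉ convexHull ℝ s) :
    ∃ ω : E →L[ℝ] ℝ, ∀ x ∈ s, 0 < ω x := by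
  obtain ⟨ω, u, hu, hω⟩ := geometric_hahn_banach_point_closed (convex_convexHull ℝ s)
    (hs.isClosed_convexHull ℝ) h
  rw [map_zero] at hu
  exact ⟨ω, fun x hx => hu.trans (hω x (subset_convexHull ℝ s hx))⟩

lemma IsHalfspace.convex_diff_singleton {S : Set (Fin k → ℝ)} (hS : IsHalfspace k S) :
    Convex ℝ (S \ {0}) := by
  have hzero : ∀ x ∈ S, ∀ y ∈ S, x + y = 0 → x = 0 := fun x hx y hy hxy => by
    have hmem : x ∈ S ∩ -S := ⟨hx, by rwa [Set.mem_neg, neg_eq_of_add_eq_zero_right hxy]⟩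
    rwa [hS.inter] at hmem
  refine convex_iff_forall_pos.2 fun x hx y hy a b ha hb _ => ?_
  have hax := hS.smul_mem x hx.1 a ha.le
  have hby := hS.smul_mem y hy.1 b hb.le
  exact ⟨hS.add_mem _ hax _ hby, fun h =>
    hx.2 ((smul_eq_zero.1 (hzero _ hax _ hby h)).resolve_left ha.ne')⟩

/-- Finitely many nonzero frequencies admit a common positive functional. -/
lemma exists_trigPoly_mem_range_dilation {A : AddSubmonoid (Fin k → ℝ)}
    (hA : (0 : Fin k → ℝ) ∉ convexHull ℝ ((A : Set (Fin k → ℝ)) \ {0})) {ι : Type*} [Finite ι]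
    (x : ι → AddMonoidAlgebra ℂ A) :
    ∃ ω : A →+ ℝ, ∀ i, trigPoly A (x i) ∈ (dilation ω 1).range := by
  let F : Set A := ⋃ i, (x i).coeff.support
  have hF : F.Finite := Set.finite_iUnion fun i => Finset.finite_toSet _
  have hFA : ((↑) '' F : Set (Fin k → ℝ)) \ {0} ⊆ (A : Set (Fin k → ℝ)) \ {0} :=
    Set.sdiff_subset_sdiff_left (Set.image_subset_iff.2 fun lam _ => lam.2)
  obtain ⟨ω, hω⟩ := exists_forall_pos_of_zero_notMem_convexHull (hF.image _).sdiff
    fun h => hA (convexHull_mono hFA h)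
  refine ⟨(ω : (Fin k → ℝ) →+ ℝ).comp A.subtype, fun i => ?_⟩
  refine trigPoly_mem_range_dilation fun lam hlam => or_iff_not_imp_left.2 fun hne => ?_
  exact hω lam ⟨⟨lam, Set.mem_iUnion_of_mem i hlam, rfl⟩, fun h => hne (Subtype.ext h)⟩

lemma IsUnimodular.exists_trigPoly_rowEquiv {A : AddSubmonoid (Fin k → ℝ)} {n : Type*} [Fintype n]
    [DecidableEq n] {a : n → WienerAlgebra A} (ha : IsUnimodular a) :
    ∃ x y : n → AddMonoidAlgebra ℂ A, RowEquiv a (trigPoly A ∘ x) ∧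
      ‖1 - (trigPoly A ∘ x) ⬝ᵥ (trigPoly A ∘ y)‖ < 1 := by
  obtain ⟨b, hb⟩ := id ha
  have hnear : ∀ᶠ p in 𝓝 (a, b), RowEquiv a p.1 ∧ ‖1 - p.1 ⬝ᵥ p.2‖ < 1 := by
    refine (continuous_fst.continuousAt.eventually ha.eventually_rowEquiv).and ?_
    have hcont : Continuous fun p : (n → WienerAlgebra A) × (n → WienerAlgebra A) =>
        ‖1 - p.1 ⬝ᵥ p.2‖ := by fun_prop
    exact hcont.continuousAt.eventually_lt_const (by simp [hb])
  have hdense : DenseRange (trigPoly A ∘ · : (n → AddMonoidAlgebra ℂ A) → n → WienerAlgebra A) :=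
    DenseRange.piMap fun _ => denseRange_trigPoly
  obtain ⟨⟨x, y⟩, hxy⟩ := (hdense.prodMap hdense).mem_nhds hnear
  exact ⟨x, y, hxy⟩

theorem isHermiteRing_wienerAlgebra {A : AddSubmonoid (Fin k → ℝ)}
    (hA : (0 : Fin k → ℝ) ∉ convexHull ℝ ((A : Set (Fin k → ℝ)) \ {0})) :
    IsHermiteRing (WienerAlgebra A) := by
  refine isHermiteRing_of_rowEquiv_single fun m a ha => ?_
  obtain ⟨x, y, hax, hxy⟩ := ha.exists_trigPoly_rowEquiv
  obtain ⟨ω, hω⟩ := exists_trigPoly_mem_range_dilation hA (Sum.elim x y)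
  choose z hz using hω
  have hx : trigPoly A ∘ x = dilation ω 1 ∘ z ∘ Sum.inl := funext fun i => (hz (.inl i)).symm
  have hy : trigPoly A ∘ y = dilation ω 1 ∘ z ∘ Sum.inr := funext fun i => (hz (.inr i)).symm
  rw [hx] at hax
  rw [hx, hy, dilation_comp_dotProduct] at hxy
  exact hax.trans (rowEquiv_dilation_single hxy 0)

end Hermite

/-- **Hermite property of `APW^k_Σ`** (Theorem 1.2 for `APW`).  Let `S ⊂ ℝ^k`
be a halfspace and `Σ ⊆ S` an additive semigroup containing `0`.  Then the
unital Banach algebra `APW^k_Σ` (Wiener algebra of almost periodic functions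
with absolutely convergent Bohr-Fourier series and spectrum in `Σ`) is an
Hermite ring. -/
theorem apw_semigroup_hermite (k : ℕ) (S Sg : Set (Fin k → ℝ))
    (hS : IsHalfspace k S) (hSgS : Sg ⊆ S) (h0 : (0 : Fin k → ℝ) ∈ Sg)
    (hadd : ∀ x ∈ Sg, ∀ y ∈ Sg, x + y ∈ Sg) :
    ∀ (m : ℕ) (a b : Fin (m + 1) → APB k),
      (∀ i, APWmem k Sg (a i)) → (∀ i, APWmem k Sg (b i)) →
      (∑ i, a i * b i) = 1 →
      ∃ M N : Matrix (Fin (m + 1)) (Fin (m + 1)) (APB k),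
        (∀ i j, APWmem k Sg (M i j)) ∧ (∀ i j, APWmem k Sg (N i j)) ∧
        (∀ j, M 0 j = a j) ∧ M * N = 1 ∧ N * M = 1 := by
  intro m a b ha hb hab
  let A : AddSubmonoid (Fin k → ℝ) :=
    { carrier := Sg, zero_mem' := h0, add_mem' := fun hx hy => hadd _ hx _ hy }
  have hA : (0 : Fin k → ℝ) ∉ convexHull ℝ ((A : Set (Fin k → ℝ)) \ {0}) := fun h =>
    (convexHull_min (Set.sdiff_subset_sdiff_left hSgS) hS.convex_diff_singleton h).2 rfl
  choose a' ha' using fun i => WienerAlgebra.exists_val_eq (A := A) (ha i)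
  choose b' hb' using fun i => WienerAlgebra.exists_val_eq (A := A) (hb i)
  have hunimodular : a' ⬝ᵥ b' = 1 := WienerAlgebra.val_injective <| by
    simpa only [dotProduct, map_sum, map_mul, map_one, ha', hb'] using hab
  obtain ⟨G, hG⟩ := isHermiteRing_wienerAlgebra hA m a' ⟨b', hunimodular⟩
  let φ := (WienerAlgebra.val A).mapMatrix (m := Fin (m + 1))
  refine ⟨φ G.val, φ G⁻¹.val, fun i j => WienerAlgebra.apwmem_val (G.val i j),
    fun i j => WienerAlgebra.apwmem_val (G⁻¹.val i j), fun j => ?_, ?_, ?_⟩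
  · exact (congrArg (WienerAlgebra.val A) (congrFun hG j)).trans (ha' j)
  · rw [← map_mul, Units.mul_inv, map_one]
  · rw [← map_mul, Units.inv_mul, map_one]
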